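/- (Ando–Hiai inequality, norm form) For positive definite matrices A, B, 0 ≤ α ≤ 1 and r ≥ 1, the largest eigenvalue satisfies λ₁(A^r #_α B^r) ≤ λ₁(A #_α B)^r, where A #_α B := A^{1/2}(A^{-1/2} B A^{-1/2})^α A^{1/2}. -/

import Mathlib

open scoped ComplexOrder
open Matrix

/-- The `t`-th power of a Hermitian matrix, defined via the spectral decomposition
(functional calculus with the real power function). -/
noncomputable def psdPow {n : ℕ} (A : Matrix (Fin n) (Fin n) ℂ) (hA : A.IsHermitian) (t : ℝ) :
    Matrix (Fin n) (Fin n) ℂ :=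
  (hA.eigenvectorUnitary : Matrix (Fin n) (Fin n) ℂ) *
    Matrix.diagonal (fun i => ((hA.eigenvalues i ^ t : ℝ) : ℂ)) *
    (hA.eigenvectorUnitary : Matrix (Fin n) (Fin n) ℂ)ᴴ

lemma psdPow_isHermitian {n : ℕ} (A : Matrix (Fin n) (Fin n) ℂ) (hA : A.IsHermitian) (t : ℝ) :
    (psdPow A hA t).IsHermitian := by
  unfold psdPow
  apply Matrix.isHermitian_mul_mul_conjTranspose
  rw [Matrix.isHermitian_diagonal_iff]
  intro i
  exact Complex.conj_ofReal _

lemma isHermitian_conj {n : ℕ} {C B : Matrix (Fin n) (Fin n) ℂ}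
    (hC : C.IsHermitian) (hB : B.IsHermitian) : (C * B * C).IsHermitian := by
  have := Matrix.isHermitian_mul_mul_conjTranspose C hB
  rwa [hC] at this

/-- The α-weighted geometric mean `A #_α B = A^{1/2} (A^{-1/2} B A^{-1/2})^α A^{1/2}`
of Hermitian (in applications, positive definite) matrices, where `A^{-1/2} = A^{(-1/2)}`
via functional calculus. -/
noncomputable def wGeomMean {n : ℕ} (A B : Matrix (Fin n) (Fin n) ℂ)
    (hA : A.IsHermitian) (hB : B.IsHermitian) (α : ℝ) : Matrix (Fin n) (Fin n) ℂ :=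
  psdPow A hA (1/2) *
    psdPow (psdPow A hA (-(1/2)) * B * psdPow A hA (-(1/2)))
      (isHermitian_conj (psdPow_isHermitian A hA (-(1/2))) hB) α *
    psdPow A hA (1/2)

lemma wGeomMean_isHermitian {n : ℕ} (A B : Matrix (Fin n) (Fin n) ℂ)
    (hA : A.IsHermitian) (hB : B.IsHermitian) (α : ℝ) : (wGeomMean A B hA hB α).IsHermitian :=
  isHermitian_conj (psdPow_isHermitian A hA (1/2)) (psdPow_isHermitian _ _ α)

/-!
Put `c = a^{-1/2} b a^{-1/2}`, so that `a #_α b = a^{1/2} c^α a^{1/2}`. After scaling,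
`a #_α b ≤ 1`, which means `a ≤ c^{-α}`. For `1 ≤ r ≤ 2`, operator monotonicity of `x ↦ x^{r-1}`
together with Furuta's identity `(z z⋆)^r = z (z⋆ z)^{r-1} z⋆` turns this into
`a^r ≤ a^{1/2} c^{-α(r-1)} a^{1/2}` and `b^r ≤ a^{1/2} c^{r-α(r-1)} a^{1/2}`. The geometric mean is
monotone and congruence invariant, and the mean of the two powers of `c` is `c^α`; hence
`a^r #_α b^r ≤ a^{1/2} c^α a^{1/2} = a #_α b`. An arbitrary `r ≥ 1` is a power of some
`s ∈ [1, 2]`, so iterating this bound covers all exponents.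
-/

section CStarAlgebra

open CFC Set

variable {𝔸 : Type*} [CStarAlgebra 𝔸] [PartialOrder 𝔸] [StarOrderedRing 𝔸]
  {a b c x y s : 𝔸} {α β r : ℝ}

lemma star_rpow (x : 𝔸) (t : ℝ) : star (x ^ t) = x ^ t :=
  (IsSelfAdjoint.of_nonneg rpow_nonneg).star_eq

lemma continuousOn_rpow_const_spectrum (hx : IsStrictlyPositive x) (t : ℝ) :
    ContinuousOn (fun y : ℝ ↦ y ^ t) (spectrum ℝ x) :=
  ContinuousOn.rpow_const continuousOn_id fun _ hy ↦ .inl (hx.spectrum_pos hy).ne'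

lemma rpow_rpow_of_isStrictlyPositive (hx : IsStrictlyPositive x) (p q : ℝ) :
    (x ^ p) ^ q = x ^ (p * q) := by
  rcases eq_or_ne p 0 with rfl | hp
  · rw [rpow_zero x hx.nonneg, zero_mul, rpow_zero x hx.nonneg, one_rpow]
  · exact rpow_rpow x p q hp hx

lemma smul_rpow (hx : IsStrictlyPositive x) {k : ℝ} (hk : 0 < k) (t : ℝ) :
    (k • x) ^ t = k ^ t • x ^ t := by
  have hkx : cfc (fun y : ℝ ↦ k * y) x = k • x := cfc_const_mul_id k x hx.isSelfAdjoint
  calc (k • x) ^ t = cfc (fun y : ℝ ↦ (k * y) ^ t) x := by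
        rw [← hkx, cfc_rpow (fun y hy ↦ mul_pos hk (hx.spectrum_pos hy))]
    _ = cfc (fun y : ℝ ↦ k ^ t • y ^ t) x :=
        cfc_congr fun y hy ↦ Real.mul_rpow hk.le (hx.spectrum_pos hy).le
    _ = k ^ t • x ^ t := by
        rw [cfc_smul _ _ x (continuousOn_rpow_const_spectrum hx t), rpow_eq_cfc_real hx.nonneg]

lemma unitary_conj_rpow (u : unitary 𝔸) (hx : IsStrictlyPositive x) (t : ℝ) :
    (u * x * star (u : 𝔸)) ^ t = u * x ^ t * star (u : 𝔸) := by
  have hcont : Continuous (Unitary.conjStarAlgAut ℂ 𝔸 u) := by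
    change Continuous fun y : 𝔸 ↦ u * y * star (u : 𝔸)
    fun_prop
  rw [rpow_eq_cfc_real (star_right_conjugate_nonneg hx.nonneg (u : 𝔸)),
    rpow_eq_cfc_real hx.nonneg]
  exact (StarAlgHomClass.map_cfc (S := ℂ) (Unitary.conjStarAlgAut ℂ 𝔸 u) (fun y : ℝ ↦ y ^ t) x
    (continuousOn_rpow_const_spectrum hx t) hcont hx.isSelfAdjoint
    (hx.isSelfAdjoint.conjugate (u : 𝔸))).symm

lemma rpow_half_mul_star (hx : IsStrictlyPositive x) :
    x ^ (1 / 2 : ℝ) * star (x ^ (1 / 2 : ℝ)) = x := by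
  rw [star_rpow, ← rpow_add hx.isUnit, add_halves, rpow_one x hx.nonneg]

lemma exists_eq_star_right_conjugate (ha : IsStrictlyPositive a) (hb : IsStrictlyPositive b) :
    ∃ s d : 𝔸, IsUnit s ∧ IsStrictlyPositive d ∧ a = s * star s ∧ b = s * d * star s := by
  have hroot := (ha.rpow a (1 / 2)).isUnit
  have hinv := (ha.rpow a (-(1 / 2))).isUnit
  refine ⟨a ^ (1 / 2 : ℝ), a ^ (-(1 / 2) : ℝ) * b * star (a ^ (-(1 / 2) : ℝ)), hroot,
    hinv.isStrictlyPositive_star_right_conjugate_iff.2 hb, (rpow_half_mul_star ha).symm, ?_⟩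
  calc b = (a ^ (1 / 2 : ℝ) * a ^ (-(1 / 2) : ℝ)) * b *
          (a ^ (-(1 / 2) : ℝ) * a ^ (1 / 2 : ℝ)) := by
        rw [rpow_mul_rpow_neg _ ha, rpow_neg_mul_rpow _ ha, one_mul, mul_one]
    _ = _ := by simp only [star_rpow, mul_assoc]

lemma mul_star_self_le_one_iff_star_mul_self_le_one :
    x * star x ≤ 1 ↔ star x * x ≤ 1 := by
  rw [← CStarAlgebra.norm_le_one_iff_of_nonneg _ (mul_star_self_nonneg x),
    ← CStarAlgebra.norm_le_one_iff_of_nonneg _ (star_mul_self_nonneg x),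
    CStarRing.norm_self_mul_star, CStarRing.norm_star_mul_self]

lemma star_mul_self_le_rpow_neg_one (hy : IsStrictlyPositive y) (h : x * y * star x ≤ 1) :
    star x * x ≤ y ^ (-1 : ℝ) := by
  have hxy : star (x * y ^ (1 / 2 : ℝ)) * (x * y ^ (1 / 2 : ℝ)) ≤ 1 := by
    rw [← mul_star_self_le_one_iff_star_mul_self_le_one]
    calc x * y ^ (1 / 2 : ℝ) * star (x * y ^ (1 / 2 : ℝ))
        = x * (y ^ (1 / 2 : ℝ) * star (y ^ (1 / 2 : ℝ))) * star x := by
          simp only [star_mul, mul_assoc]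
      _ ≤ 1 := by rwa [rpow_half_mul_star hy]
  calc star x * x
      = (y ^ (-(1 / 2) : ℝ) * y ^ (1 / 2 : ℝ)) * (star x * x) *
          (y ^ (1 / 2 : ℝ) * y ^ (-(1 / 2) : ℝ)) := by
        rw [rpow_mul_rpow_neg _ hy, rpow_neg_mul_rpow _ hy, one_mul, mul_one]
    _ = y ^ (-(1 / 2) : ℝ) * (star (x * y ^ (1 / 2 : ℝ)) * (x * y ^ (1 / 2 : ℝ))) *
          star (y ^ (-(1 / 2) : ℝ)) := by simp only [star_mul, star_rpow, mul_assoc]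
    _ ≤ y ^ (-(1 / 2) : ℝ) * 1 * star (y ^ (-(1 / 2) : ℝ)) :=
        star_right_conjugate_le_conjugate hxy _
    _ = y ^ (-1 : ℝ) := by
        rw [mul_one, star_rpow, ← rpow_add hy.isUnit]
        norm_num

/-- The `α`-weighted geometric mean `a #_α b` in a C⋆-algebra. It is intended for strictly positive
`a` and `b`, where `a ^ (-(1 / 2))` is the inverse of the square root of `a`. -/
noncomputable def geomMean (a b : 𝔸) (α : ℝ) : 𝔸 :=
  a ^ (1 / 2 : ℝ) * (a ^ (-(1 / 2) : ℝ) * b * a ^ (-(1 / 2) : ℝ)) ^ α * a ^ (1 / 2 : ℝ)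

-- `(s s⋆)^{-1/2} s` is unitary, so any `s` with `s s⋆ = a` may replace `a^{1/2}` in `a #_α b`.
lemma geomMean_mul_star (hs : IsUnit s) (hx : IsStrictlyPositive x) (α : ℝ) :
    geomMean (s * star s) (s * x * star s) α = s * x ^ α * star s := by
  obtain ⟨a, ha⟩ : ∃ a, a = s * star s := ⟨_, rfl⟩
  have ha_pos : IsStrictlyPositive a := by
    simpa [ha] using hs.isStrictlyPositive_star_right_conjugate_iff.2 isStrictlyPositive_one
  obtain ⟨u, hu⟩ : ∃ u, u = a ^ (-(1 / 2) : ℝ) * s := ⟨_, rfl⟩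
  have hu_star : star u = star s * a ^ (-(1 / 2) : ℝ) := by rw [hu, star_mul, star_rpow]
  have hu_mem : u ∈ unitary 𝔸 := by
    refine (hu ▸ (ha_pos.rpow a _).isUnit.mul hs : IsUnit u).mem_unitary_of_mul_star_self ?_
    rw [hu_star, hu, ← conjugate_rpow_neg_one_half a ha_pos]
    simp only [ha, mul_assoc]
  have hs_eq : a ^ (1 / 2 : ℝ) * u = s := by
    rw [hu, ← mul_assoc, rpow_mul_rpow_neg _ ha_pos, one_mul]
  have hs_star : star u * a ^ (1 / 2 : ℝ) = star s := by rw [← hs_eq, star_mul, star_rpow]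
  calc geomMean (s * star s) (s * x * star s) α
      = a ^ (1 / 2 : ℝ) * (u * x * star u) ^ α * a ^ (1 / 2 : ℝ) := by
        rw [geomMean, ← ha, hu_star, hu]
        simp only [mul_assoc]
    _ = (a ^ (1 / 2 : ℝ) * u) * x ^ α * (star u * a ^ (1 / 2 : ℝ)) := by
        rw [unitary_conj_rpow ⟨u, hu_mem⟩ hx]
        simp only [mul_assoc]
    _ = s * x ^ α * star s := by rw [hs_eq, hs_star]

lemma geomMean_nonneg (a b : 𝔸) (α : ℝ) : 0 ≤ geomMean a b α :=
  conjugate_nonneg_of_nonneg rpow_nonneg rpow_nonneg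

lemma geomMean_isStrictlyPositive (ha : IsStrictlyPositive a) (hb : IsStrictlyPositive b) (α : ℝ) :
    IsStrictlyPositive (geomMean a b α) := by
  obtain ⟨s, d, hs, hd, rfl, rfl⟩ := exists_eq_star_right_conjugate ha hb
  rw [geomMean_mul_star hs hd]
  exact hs.isStrictlyPositive_star_right_conjugate_iff.2 (hd.rpow d α)

lemma geomMean_star_right_conjugate (hs : IsUnit s) (ha : IsStrictlyPositive a)
    (hb : IsStrictlyPositive b) (α : ℝ) :
    geomMean (s * a * star s) (s * b * star s) α = s * geomMean a b α * star s := by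
  obtain ⟨w, d, hw, hd, rfl, rfl⟩ := exists_eq_star_right_conjugate ha hb
  have h := geomMean_mul_star (hs.mul hw) hd α
  simp only [star_mul, mul_assoc] at h
  rw [geomMean_mul_star hw hd]
  simpa only [mul_assoc] using h

lemma mul_rpow_half_conjugate_rpow (hx : IsStrictlyPositive x) (s : 𝔸) (t : ℝ) :
    s * x ^ (1 / 2 : ℝ) * x ^ t * star (s * x ^ (1 / 2 : ℝ)) = s * x ^ (1 + t) * star s := by
  calc s * x ^ (1 / 2 : ℝ) * x ^ t * star (s * x ^ (1 / 2 : ℝ))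
      = s * (x ^ (1 / 2 : ℝ) * x ^ t * x ^ (1 / 2 : ℝ)) * star s := by
        simp only [star_mul, star_rpow, mul_assoc]
    _ = s * x ^ (1 + t) * star s := by
        rw [← rpow_add hx.isUnit, ← rpow_add hx.isUnit]
        ring_nf

lemma mul_rpow_half_mul_star (hx : IsStrictlyPositive x) (s : 𝔸) :
    s * x ^ (1 / 2 : ℝ) * star (s * x ^ (1 / 2 : ℝ)) = s * x * star s := by
  simpa [rpow_zero x hx.nonneg, rpow_one x hx.nonneg] using mul_rpow_half_conjugate_rpow hx s 0

lemma geomMean_comm (ha : IsStrictlyPositive a) (hb : IsStrictlyPositive b) (α : ℝ) :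
    geomMean b a (1 - α) = geomMean a b α := by
  obtain ⟨s, d, hs, hd, rfl, rfl⟩ := exists_eq_star_right_conjugate ha hb
  have hz : IsUnit (s * d ^ (1 / 2 : ℝ)) := hs.mul (hd.rpow d _).isUnit
  have ha_eq : s * star s =
      s * d ^ (1 / 2 : ℝ) * d ^ (-1 : ℝ) * star (s * d ^ (1 / 2 : ℝ)) := by
    simpa [rpow_zero d hd.nonneg] using (mul_rpow_half_conjugate_rpow hd s (-1)).symm
  calc geomMean (s * d * star s) (s * star s) (1 - α)
      = s * d ^ (1 / 2 : ℝ) * (d ^ (-1 : ℝ)) ^ (1 - α) * star (s * d ^ (1 / 2 : ℝ)) := by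
        rw [← mul_rpow_half_mul_star hd s, ha_eq, geomMean_mul_star hz (hd.rpow d _)]
    _ = s * d ^ α * star s := by
        rw [rpow_rpow_of_isStrictlyPositive hd, mul_rpow_half_conjugate_rpow hd]
        ring_nf
    _ = geomMean (s * star s) (s * d * star s) α := (geomMean_mul_star hs hd α).symm

lemma geomMean_le_geomMean_right (a : 𝔸) (hbc : b ≤ c) (hα : α ∈ Icc 0 1) :
    geomMean a b α ≤ geomMean a c α := by
  have hinv : IsSelfAdjoint (a ^ (-(1 / 2) : ℝ)) := star_rpow a _
  exact conjugate_le_conjugate_of_nonneg (rpow_le_rpow hα (hinv.conjugate_le_conjugate hbc))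
    rpow_nonneg

lemma geomMean_le_geomMean {a₁ a₂ b₁ b₂ : 𝔸} (ha₁ : IsStrictlyPositive a₁)
    (hb₁ : IsStrictlyPositive b₁) (ha : a₁ ≤ a₂) (hb : b₁ ≤ b₂) (hα : α ∈ Icc 0 1) :
    geomMean a₁ b₁ α ≤ geomMean a₂ b₂ α := by
  have hα' : 1 - α ∈ Icc 0 1 := ⟨by linarith [hα.2], by linarith [hα.1]⟩
  calc geomMean a₁ b₁ α = geomMean b₁ a₁ (1 - α) := (geomMean_comm ha₁ hb₁ α).symm
    _ ≤ geomMean b₁ a₂ (1 - α) := geomMean_le_geomMean_right b₁ ha hα'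
    _ = geomMean a₂ b₁ α := geomMean_comm (ha₁.of_le ha) hb₁ α
    _ ≤ geomMean a₂ b₂ α := geomMean_le_geomMean_right a₂ hb hα

lemma geomMean_smul_smul (ha : IsStrictlyPositive a) (hb : IsStrictlyPositive b) {k : ℝ}
    (hk : 0 < k) (α : ℝ) : geomMean (k • a) (k • b) α = k • geomMean a b α := by
  obtain ⟨s, d, hs, hd, rfl, rfl⟩ := exists_eq_star_right_conjugate ha hb
  have h := geomMean_mul_star (s := √k • s) (hs.smul (Units.mk0 (√k) (by positivity))) hd α
  simpa [smul_smul, Real.mul_self_sqrt hk.le, geomMean_mul_star hs hd] using h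

lemma geomMean_rpow_rpow (hc : IsStrictlyPositive c) (p q α : ℝ) :
    geomMean (c ^ p) (c ^ q) α = c ^ ((1 - α) * p + α * q) := by
  simp only [geomMean, rpow_rpow_of_isStrictlyPositive hc, ← rpow_add hc.isUnit]
  congr 1
  ring

-- Both sides are the mean `s s⋆ #_{r-1} (s s⋆)^2`, computed using `(s s⋆)^{1/2}` and using `s`.
lemma mul_star_self_rpow (hs : IsUnit s) (r : ℝ) :
    (s * star s) ^ r = s * (star s * s) ^ (r - 1) * star s := by
  obtain ⟨p, hp_def⟩ : ∃ p, p = s * star s := ⟨_, rfl⟩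
  have hp : IsStrictlyPositive p := by
    simpa [hp_def] using hs.isStrictlyPositive_star_right_conjugate_iff.2 isStrictlyPositive_one
  have hq : IsStrictlyPositive (star s * s) := by
    simpa using hs.isStrictlyPositive_star_left_conjugate_iff.2 isStrictlyPositive_one
  have hmean : geomMean p (p * p) (r - 1) = s * (star s * s) ^ (r - 1) * star s := by
    rw [← geomMean_mul_star hs hq, hp_def]
    simp only [mul_assoc]
  rw [← hp_def, ← hmean]
  have hsq : p * p = p ^ (2 : ℝ) := by
    rw [← one_add_one_eq_two, rpow_add hp.isUnit, rpow_one p hp.nonneg]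
  calc p ^ r = p ^ ((1 - (r - 1)) * 1 + (r - 1) * 2) := by ring_nf
    _ = geomMean p (p * p) (r - 1) := by
      rw [← geomMean_rpow_rpow hp, rpow_one p hp.nonneg, hsq]

lemma mul_star_self_rpow_le (hs : IsUnit s) (h : star s * s ≤ x) (hr : r ∈ Icc 1 2) :
    (s * star s) ^ r ≤ s * x ^ (r - 1) * star s := by
  have hr' : r - 1 ∈ Icc 0 1 := ⟨by linarith [hr.1], by linarith [hr.2]⟩
  rw [mul_star_self_rpow hs]
  exact star_right_conjugate_le_conjugate (rpow_le_rpow hr' h) s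

lemma star_right_conjugate_rpow_le (hs : IsUnit s) (hx : IsStrictlyPositive x)
    (h : star s * s ≤ x ^ β) (hr : r ∈ Icc 1 2) :
    (s * x * star s) ^ r ≤ s * x ^ (r + β * (r - 1)) * star s := by
  have hz : IsUnit (s * x ^ (1 / 2 : ℝ)) := hs.mul (hx.rpow x _).isUnit
  have hz_le : star (s * x ^ (1 / 2 : ℝ)) * (s * x ^ (1 / 2 : ℝ)) ≤ x ^ (1 + β) := by
    calc star (s * x ^ (1 / 2 : ℝ)) * (s * x ^ (1 / 2 : ℝ))
        = 1 * x ^ (1 / 2 : ℝ) * (star s * s) * star (1 * x ^ (1 / 2 : ℝ)) := by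
          simp only [star_mul, star_rpow, one_mul, mul_assoc]
      _ ≤ 1 * x ^ (1 / 2 : ℝ) * x ^ β * star (1 * x ^ (1 / 2 : ℝ)) :=
          star_right_conjugate_le_conjugate h _
      _ = x ^ (1 + β) := by
          rw [mul_rpow_half_conjugate_rpow hx, star_one, one_mul, mul_one]
  calc (s * x * star s) ^ r
      = (s * x ^ (1 / 2 : ℝ) * star (s * x ^ (1 / 2 : ℝ))) ^ r := by
        rw [mul_rpow_half_mul_star hx]
    _ ≤ s * x ^ (1 / 2 : ℝ) * (x ^ (1 + β)) ^ (r - 1) * star (s * x ^ (1 / 2 : ℝ)) :=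
        mul_star_self_rpow_le hz hz_le hr
    _ = s * x ^ (r + β * (r - 1)) * star s := by
        rw [rpow_rpow_of_isStrictlyPositive hx, mul_rpow_half_conjugate_rpow hx]
        ring_nf

lemma geomMean_rpow_le_of_le_two (ha : IsStrictlyPositive a) (hb : IsStrictlyPositive b)
    (hα : α ∈ Icc 0 1) (hr : r ∈ Icc 1 2) (h : geomMean a b α ≤ 1) :
    geomMean (a ^ r) (b ^ r) α ≤ geomMean a b α := by
  have har := ha.rpow a r
  have hbr := hb.rpow b r
  obtain ⟨s, c, hs, hc, rfl, rfl⟩ := exists_eq_star_right_conjugate ha hb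
  rw [geomMean_mul_star hs hc] at h ⊢
  have hsc : star s * s ≤ c ^ (-α) := by
    simpa [rpow_rpow_of_isStrictlyPositive hc] using
      star_mul_self_le_rpow_neg_one (hc.rpow c α) h
  have ha_le : (s * star s) ^ r ≤ s * c ^ (-α * (r - 1)) * star s := by
    simpa only [rpow_rpow_of_isStrictlyPositive hc] using mul_star_self_rpow_le hs hsc hr
  have hb_le := star_right_conjugate_rpow_le hs hc hsc hr
  calc geomMean ((s * star s) ^ r) ((s * c * star s) ^ r) α
      ≤ geomMean (s * c ^ (-α * (r - 1)) * star s) (s * c ^ (r + -α * (r - 1)) * star s) α :=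
        geomMean_le_geomMean har hbr ha_le hb_le hα
    _ = s * geomMean (c ^ (-α * (r - 1))) (c ^ (r + -α * (r - 1))) α * star s :=
        geomMean_star_right_conjugate hs (hc.rpow c _) (hc.rpow c _) α
    _ = s * c ^ α * star s := by
        rw [geomMean_rpow_rpow hc]
        ring_nf

lemma geomMean_rpow_pow_le (ha : IsStrictlyPositive a) (hb : IsStrictlyPositive b)
    (hα : α ∈ Icc 0 1) (hr : r ∈ Icc 1 2) (h : geomMean a b α ≤ 1) (n : ℕ) :
    geomMean (a ^ (r ^ n)) (b ^ (r ^ n)) α ≤ geomMean a b α := by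
  induction n with
  | zero => rw [pow_zero, rpow_one a ha.nonneg, rpow_one b hb.nonneg]
  | succ n ih =>
    calc geomMean (a ^ (r ^ (n + 1))) (b ^ (r ^ (n + 1))) α
        = geomMean ((a ^ (r ^ n)) ^ r) ((b ^ (r ^ n)) ^ r) α := by
          rw [rpow_rpow_of_isStrictlyPositive ha, rpow_rpow_of_isStrictlyPositive hb, pow_succ]
      _ ≤ geomMean (a ^ (r ^ n)) (b ^ (r ^ n)) α :=
          geomMean_rpow_le_of_le_two (ha.rpow a _) (hb.rpow b _) hα hr (ih.trans h)
      _ ≤ geomMean a b α := ih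

theorem geomMean_rpow_le (ha : IsStrictlyPositive a) (hb : IsStrictlyPositive b)
    (hα : α ∈ Icc 0 1) (hr : 1 ≤ r) (h : geomMean a b α ≤ 1) :
    geomMean (a ^ r) (b ^ r) α ≤ geomMean a b α := by
  obtain ⟨n, hn⟩ := pow_unbounded_of_one_lt r one_lt_two
  have hn₀ : n ≠ 0 := by
    rintro rfl
    exact hn.not_ge (by simpa using hr)
  have hr₀ : 0 ≤ r := zero_le_one.trans hr
  have hroot : r ^ (n⁻¹ : ℝ) ∈ Icc 1 2 := by
    refine ⟨Real.one_le_rpow hr (by positivity), ?_⟩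
    rw [Real.rpow_inv_le_iff_of_pos hr₀ zero_le_two (by positivity), Real.rpow_natCast]
    exact hn.le
  simpa only [Real.rpow_inv_natCast_pow hr₀ hn₀] using geomMean_rpow_pow_le ha hb hα hroot h n

theorem ando_hiai_general (ha : IsStrictlyPositive a) (hb : IsStrictlyPositive b)
    (hα : α ∈ Icc 0 1) (hr : 1 ≤ r) :
    ‖geomMean (a ^ r) (b ^ r) α‖ ≤ ‖geomMean a b α‖ ^ r := by
  rcases subsingleton_or_nontrivial 𝔸 with _ | _
  · rw [norm_of_subsingleton]
    positivity
  obtain ⟨k, hk_def⟩ : ∃ k, k = ‖geomMean a b α‖ := ⟨_, rfl⟩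
  have hk : 0 < k := hk_def ▸ norm_pos_iff.2 (geomMean_isStrictlyPositive ha hb α).isUnit.ne_zero
  have hki : 0 < k⁻¹ := inv_pos.2 hk
  have hmean : geomMean (k⁻¹ • a) (k⁻¹ • b) α ≤ 1 := by
    rw [← CStarAlgebra.norm_le_one_iff_of_nonneg _ (geomMean_nonneg _ _ _),
      geomMean_smul_smul ha hb hki, norm_smul, Real.norm_of_nonneg hki.le, ← hk_def,
      inv_mul_cancel₀ hk.ne']
  have hmean_rpow : k⁻¹ ^ r * ‖geomMean (a ^ r) (b ^ r) α‖ ≤ 1 := by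
    have hle := (geomMean_rpow_le (.smul hki ha) (.smul hki hb) hα hr hmean).trans hmean
    rw [smul_rpow ha hki, smul_rpow hb hki,
      geomMean_smul_smul (ha.rpow a r) (hb.rpow b r) (by positivity)] at hle
    calc k⁻¹ ^ r * ‖geomMean (a ^ r) (b ^ r) α‖ = ‖k⁻¹ ^ r • geomMean (a ^ r) (b ^ r) α‖ := by
          rw [norm_smul, Real.norm_of_nonneg (by positivity)]
      _ ≤ 1 := (CStarAlgebra.norm_le_one_iff_of_nonneg _
          (smul_nonneg (by positivity) (geomMean_nonneg _ _ _))).2 hle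
  rwa [Real.inv_rpow hk.le, inv_mul_le_one₀ (by positivity), hk_def] at hmean_rpow

end CStarAlgebra

section Matrix

open scoped Matrix.Norms.L2Operator MatrixOrder

variable {n : ℕ} {A B : Matrix (Fin n) (Fin n) ℂ}

lemma psdPow_eq_rpow (hA : A.PosSemidef) (t : ℝ) : psdPow A hA.1 t = A ^ t := by
  rw [CFC.rpow_eq_cfc_real hA.nonneg, hA.1.cfc_eq, Matrix.IsHermitian.cfc,
    Unitary.conjStarAlgAut_apply]
  rfl

lemma psdPow_posSemidef (hA : A.PosSemidef) (t : ℝ) : (psdPow A hA.1 t).PosSemidef := by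
  rw [psdPow_eq_rpow hA, ← Matrix.nonneg_iff_posSemidef]
  exact CFC.rpow_nonneg

lemma wGeomMean_eq_geomMean (hA : A.PosSemidef) (hB : B.PosSemidef) (α : ℝ) :
    wGeomMean A B hA.1 hB.1 α = geomMean A B α := by
  have hconj : (psdPow A hA.1 (-(1 / 2)) * B * psdPow A hA.1 (-(1 / 2))).PosSemidef := by
    rw [psdPow_eq_rpow hA, ← Matrix.nonneg_iff_posSemidef]
    exact conjugate_nonneg_of_nonneg hB.nonneg CFC.rpow_nonneg
  rw [wGeomMean, geomMean, psdPow_eq_rpow hconj, psdPow_eq_rpow hA, psdPow_eq_rpow hA]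

lemma iSup_eigenvalues_eq_norm {ι 𝕜 : Type*} [Fintype ι] [DecidableEq ι] [RCLike 𝕜]
    {M : Matrix ι ι 𝕜} (hM : M.PosSemidef) : ⨆ i, hM.1.eigenvalues i = ‖M‖ := by
  have hnorm : ‖M‖ = ‖(RCLike.ofReal ∘ hM.1.eigenvalues : ι → 𝕜)‖ := by
    conv_lhs => rw [hM.1.spectral_theorem, Unitary.conjStarAlgAut_apply, ← Unitary.coe_star,
      CStarRing.norm_mul_coe_unitary, CStarRing.norm_coe_unitary_mul, Matrix.l2_opNorm_diagonal]
  have hcoord (i : ι) : ‖(RCLike.ofReal ∘ hM.1.eigenvalues : ι → 𝕜) i‖ = hM.1.eigenvalues i := by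
    rw [Function.comp_apply, RCLike.norm_of_nonneg (hM.eigenvalues_nonneg i)]
  have hbdd := (Set.finite_range hM.1.eigenvalues).bddAbove
  rw [hnorm]
  refine le_antisymm (Real.iSup_le (fun i ↦ ?_) (norm_nonneg _)) ?_
  · exact (hcoord i).symm.trans_le (norm_le_pi_norm _ i)
  · refine (pi_norm_le_iff_of_nonneg (Real.iSup_nonneg hM.eigenvalues_nonneg)).2 fun i ↦ ?_
    exact (hcoord i).trans_le (le_ciSup hbdd i)

lemma iSup_eigenvalues_wGeomMean (hA : A.PosSemidef) (hB : B.PosSemidef) (α : ℝ) :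
    ⨆ i, (wGeomMean_isHermitian A B hA.1 hB.1 α).eigenvalues i = ‖geomMean A B α‖ := by
  have hpos : (wGeomMean A B hA.1 hB.1 α).PosSemidef := by
    rw [wGeomMean_eq_geomMean hA hB, ← Matrix.nonneg_iff_posSemidef]
    exact geomMean_nonneg A B α
  rw [iSup_eigenvalues_eq_norm hpos, wGeomMean_eq_geomMean hA hB]

end Matrix

/-- Ando–Hiai inequality (norm form): for positive definite `A, B`, `0 ≤ α ≤ 1` and
`r ≥ 1`, the largest eigenvalue satisfies `λ₁(A^r #_α B^r) ≤ λ₁(A #_α B)^r`. -/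
theorem ando_hiai {n : ℕ} (A B : Matrix (Fin n) (Fin n) ℂ)
    (hA : A.PosDef) (hB : B.PosDef) (α r : ℝ) (hα₀ : 0 ≤ α) (hα₁ : α ≤ 1) (hr : 1 ≤ r) :
    (⨆ i, (wGeomMean_isHermitian (psdPow A hA.1 r) (psdPow B hB.1 r)
        (psdPow_isHermitian A hA.1 r) (psdPow_isHermitian B hB.1 r) α).eigenvalues i)
      ≤ (⨆ i, (wGeomMean_isHermitian A B hA.1 hB.1 α).eigenvalues i) ^ r := by
  open scoped Matrix.Norms.L2Operator MatrixOrder in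
  rw [iSup_eigenvalues_wGeomMean (psdPow_posSemidef hA.posSemidef r)
    (psdPow_posSemidef hB.posSemidef r), iSup_eigenvalues_wGeomMean hA.posSemidef hB.posSemidef,
    psdPow_eq_rpow hA.posSemidef, psdPow_eq_rpow hB.posSemidef]
  exact ando_hiai_general hA.isStrictlyPositive hB.isStrictlyPositive ⟨hα₀, hα₁⟩ hr
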